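/- For every f ∈ 𝓗 and every μ ∈ (0,∞)ⁿ one has the identity μ₁⋯μₙ · ∫_{ℝⁿ} ‖R(λ+iμ) f‖² dλ = πⁿ · ‖f‖², where the integration is over λ ∈ ℝⁿ with respect to Lebesgue measure. -/

import Mathlib

/-!
For a self-adjoint `a` with resolvent `R` and `z = x + iy`, `y ≠ 0`, functional calculus identifies
`(R z)⋆ * R z` with the function `t ↦ ((x - t)² + y²)⁻¹` of `a`. As a function of `x` this is a
multiple of a Cauchy density, with integral `π / |y|` whatever `t` is, so integrating over `x` under
the functional calculus gives the scalar `π / |y|`. Hence `∫ ‖R (x + iy) v‖² dx = (π / |y|) ‖v‖²`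
for every vector `v`. In a product of resolvents, Tonelli's theorem allows the leftmost factor to be
integrated out first: whatever vector the other factors produce, its squared norm is only multiplied
by a constant. The factors are thus removed one at a time.
-/

open MeasureTheory Set
open scoped ENNReal NNReal

/-- The product of resolvents `∏_{j} (H_j − λ_j − iμ_j)⁻¹` of a family of pairwise
commuting bounded self-adjoint operators. -/
noncomputable def resolventProd {𝓗 : Type*} [NormedAddCommGroup 𝓗] [InnerProductSpace ℂ 𝓗]
    (n : ℕ) (H : Fin n → (𝓗 →L[ℂ] 𝓗)) (lam mu : Fin n → ℝ) : 𝓗 →L[ℂ] 𝓗 :=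
  (List.ofFn fun j =>
    Ring.inverse (H j - (((lam j : ℂ) + Complex.I * (mu j : ℂ)) • (1 : 𝓗 →L[ℂ] 𝓗)))).prod

section CauchyKernel

variable {y : ℝ}

lemma integral_inv_sub_sq_add_sq (hy : y ≠ 0) (t : ℝ) :
    ∫ x : ℝ, ((x - t) ^ 2 + y ^ 2)⁻¹ = Real.pi / |y| := by
  have hmass := ProbabilityTheory.integral_cauchyPDFReal_eq_one t (nnnorm_ne_zero_iff.mpr hy)
  simp only [ProbabilityTheory.cauchyPDFReal_def, coe_nnnorm, Real.norm_eq_abs, sq_abs,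
    integral_const_mul] at hmass
  field_simp at hmass ⊢
  linarith

lemma integrable_inv_sub_sq_add_sq (hy : y ≠ 0) (t : ℝ) :
    Integrable fun x : ℝ => ((x - t) ^ 2 + y ^ 2)⁻¹ := by
  refine .of_integral_ne_zero ?_
  rw [integral_inv_sub_sq_add_sq hy t]
  positivity

lemma inv_sub_sq_add_sq_le (hy : y ≠ 0) (x t : ℝ) :
    ((x - t) ^ 2 + y ^ 2)⁻¹ ≤ 2 * (t ^ 2 + y ^ 2) / y ^ 2 * (x ^ 2 + y ^ 2)⁻¹ := by
  have peetre : y ^ 2 * (x ^ 2 + y ^ 2) ≤ 2 * (t ^ 2 + y ^ 2) * ((x - t) ^ 2 + y ^ 2) := by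
    nlinarith [sq_nonneg ((x - t) * t), sq_nonneg (y * (x - 2 * t)), sq_nonneg (y ^ 2)]
  rw [← div_eq_mul_inv, div_div, inv_eq_one_div, div_le_div_iff₀ (by positivity) (by positivity)]
  linarith

lemma exists_integrable_bound_inv_sub_sq_add_sq (hy : y ≠ 0) {s : Set ℝ}
    (hs : Bornology.IsBounded s) :
    ∃ bound : ℝ → ℝ, Integrable bound ∧
      ∀ x, ∀ t ∈ s, ‖((x - t) ^ 2 + y ^ 2)⁻¹‖ ≤ bound x := by
  obtain ⟨M, hM⟩ := hs.exists_norm_le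
  refine ⟨fun x => 2 * (M ^ 2 + y ^ 2) / y ^ 2 * (x ^ 2 + y ^ 2)⁻¹,
    .const_mul (by simpa using integrable_inv_sub_sq_add_sq hy 0) _, fun x t ht => ?_⟩
  have htM : t ^ 2 ≤ M ^ 2 := sq_le_sq.mpr ((hM t ht).trans (le_abs_self M))
  calc ‖((x - t) ^ 2 + y ^ 2)⁻¹‖
    _ = ((x - t) ^ 2 + y ^ 2)⁻¹ := Real.norm_of_nonneg (by positivity)
    _ ≤ 2 * (t ^ 2 + y ^ 2) / y ^ 2 * (x ^ 2 + y ^ 2)⁻¹ := inv_sub_sq_add_sq_le hy x t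
    _ ≤ 2 * (M ^ 2 + y ^ 2) / y ^ 2 * (x ^ 2 + y ^ 2)⁻¹ := by gcongr

lemma continuous_uncurry_inv_sub_sq_add_sq (hy : y ≠ 0) :
    Continuous (Function.uncurry fun x t : ℝ => ((x - t) ^ 2 + y ^ 2)⁻¹) :=
  Continuous.inv₀ (f := fun p : ℝ × ℝ => (p.1 - p.2) ^ 2 + y ^ 2) (by fun_prop)
    fun p => by positivity

end CauchyKernel

section Resolvent

lemma sub_ne_zero_of_mem_resolventSet_of_mem_spectrum {R B : Type*} [CommRing R] [Ring B]
    [Algebra R B] {b : B} {r s : R} (hr : r ∈ resolventSet R b) (hs : s ∈ spectrum R b) :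
    r - s ≠ 0 :=
  sub_ne_zero.mpr fun hrs => hs (hrs ▸ hr)

variable {A : Type*} [CStarAlgebra A] {a : A}

lemma cfc_inv_sub_eq_resolvent (a : A) [IsStarNormal a] {z : ℂ} (hz : z ∈ resolventSet ℂ a) :
    cfc (fun w => (z - w)⁻¹) a = resolvent a z := by
  have hne (w : ℂ) (hw : w ∈ spectrum ℂ a) : z - w ≠ 0 :=
    sub_ne_zero_of_mem_resolventSet_of_mem_spectrum hz hw
  rw [cfc_inv _ a hne, cfc_sub .., cfc_const .., cfc_id' .., resolvent]

lemma mem_resolventSet_of_im_ne_zero (ha : IsSelfAdjoint a) {z : ℂ} (hz : z.im ≠ 0) :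
    z ∈ resolventSet ℂ a :=
  by_contra fun hspec => hz (ha.im_eq_zero_of_mem_spectrum hspec)

variable {y : ℝ}

lemma ofReal_add_I_mul_mem_resolventSet (ha : IsSelfAdjoint a) (hy : y ≠ 0) (x : ℝ) :
    (x + Complex.I * y : ℂ) ∈ resolventSet ℂ a :=
  mem_resolventSet_of_im_ne_zero ha (by simpa using hy)

lemma continuous_resolvent_ofReal_add_I_mul (ha : IsSelfAdjoint a) (hy : y ≠ 0) :
    Continuous fun x : ℝ => resolvent a (x + Complex.I * y : ℂ) :=
  continuous_iff_continuousAt.mpr fun x =>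
    (spectrum.hasDerivAt_resolvent_const_left
      (ofReal_add_I_mul_mem_resolventSet ha hy x)).continuousAt.comp
      (f := fun x : ℝ => (x + Complex.I * y : ℂ)) (by fun_prop)

lemma star_resolvent_mul_resolvent_eq_cfc (ha : IsSelfAdjoint a) (hy : y ≠ 0) (x : ℝ) :
    star (resolvent a (x + Complex.I * y : ℂ)) * resolvent a (x + Complex.I * y : ℂ) =
      cfc (fun t : ℝ => ((x - t) ^ 2 + y ^ 2)⁻¹) a := by
  have hnormal := ha.isStarNormal
  have hres := ofReal_add_I_mul_mem_resolventSet ha hy x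
  set z : ℂ := x + Complex.I * y with hz
  have hcont : ContinuousOn (fun w => (z - w)⁻¹) (spectrum ℂ a) :=
    .inv₀ (by fun_prop) fun w hw => sub_ne_zero_of_mem_resolventSet_of_mem_spectrum hres hw
  rw [← cfc_inv_sub_eq_resolvent a hres, ← cfc_star,
    ← cfc_mul _ _ a hcont.star hcont, cfc_real_eq_complex _ ha]
  refine cfc_congr fun w hw => ?_
  have hnormSq : Complex.normSq (z - w) = (x - w.re) ^ 2 + y ^ 2 := by
    simp [hz, Complex.normSq_apply, ha.im_eq_zero_of_mem_spectrum hw, sq]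
  simp only [star_inv₀, ← mul_inv, Complex.star_def, ← Complex.normSq_eq_conj_mul_self, hnormSq,
    Complex.ofReal_inv]

lemma integrable_star_resolvent_mul_resolvent (ha : IsSelfAdjoint a) (hy : y ≠ 0) :
    Integrable fun x : ℝ =>
      star (resolvent a (x + Complex.I * y : ℂ)) * resolvent a (x + Complex.I * y : ℂ) := by
  obtain ⟨bound, hint, hle⟩ :=
    exists_integrable_bound_inv_sub_sq_add_sq hy (spectrum.isCompact (𝕜 := ℝ) a).isBounded
  simp only [star_resolvent_mul_resolvent_eq_cfc ha hy]
  exact integrable_cfc _ bound a (continuous_uncurry_inv_sub_sq_add_sq hy).continuousOn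
    (.of_forall hle) hint.hasFiniteIntegral

lemma integral_star_resolvent_mul_resolvent (ha : IsSelfAdjoint a) (hy : y ≠ 0) :
    ∫ x : ℝ, star (resolvent a (x + Complex.I * y : ℂ)) * resolvent a (x + Complex.I * y : ℂ) =
      algebraMap ℝ A (Real.pi / |y|) := by
  obtain ⟨bound, hint, hle⟩ :=
    exists_integrable_bound_inv_sub_sq_add_sq hy (spectrum.isCompact (𝕜 := ℝ) a).isBounded
  simp only [star_resolvent_mul_resolvent_eq_cfc ha hy]
  rw [← cfc_integral _ bound a (continuous_uncurry_inv_sub_sq_add_sq hy).continuousOn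
    (.of_forall hle) hint.hasFiniteIntegral]
  simp only [integral_inv_sub_sq_add_sq hy, cfc_const _ a]

end Resolvent

lemma lintegral_enorm_sq_apply_eq_re_inner {E F X : Type*}
    [NormedAddCommGroup E] [InnerProductSpace ℂ E] [CompleteSpace E]
    [NormedAddCommGroup F] [InnerProductSpace ℂ F] [CompleteSpace F]
    [MeasurableSpace X] {ν : Measure X} {T : X → E →L[ℂ] F}
    (hT : Integrable (fun x => (T x).adjoint ∘L T x) ν) (v : E) :
    ∫⁻ x, ‖T x v‖ₑ ^ 2 ∂ν =
      ENNReal.ofReal (RCLike.re (inner ℂ v ((∫ x, (T x).adjoint ∘L T x ∂ν) v))) := by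
  have hTv : Integrable (fun x => ((T x).adjoint ∘L T x) v) ν := hT.apply_continuousLinearMap v
  rw [ContinuousLinearMap.integral_apply hT, ← integral_inner hTv,
    ← integral_re (hTv.const_inner v)]
  simp only [← ContinuousLinearMap.apply_norm_sq_eq_inner_adjoint_right]
  have hsq : Integrable (fun x => ‖T x v‖ ^ 2) ν := by
    simpa only [ContinuousLinearMap.apply_norm_sq_eq_inner_adjoint_right]
      using (hTv.const_inner v).re
  rw [ofReal_integral_eq_lintegral_ofReal hsq (.of_forall fun x => sq_nonneg _)]
  simp only [ENNReal.ofReal_pow (norm_nonneg _), ofReal_norm]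

lemma lintegral_enorm_sq_resolvent_apply {𝓗 : Type*} [NormedAddCommGroup 𝓗]
    [InnerProductSpace ℂ 𝓗] [CompleteSpace 𝓗] {H : 𝓗 →L[ℂ] 𝓗} (hH : IsSelfAdjoint H)
    {y : ℝ} (hy : y ≠ 0) (v : 𝓗) :
    ∫⁻ x : ℝ, ‖resolvent H (x + Complex.I * y : ℂ) v‖ₑ ^ 2 =
      ENNReal.ofReal (Real.pi / |y|) * ‖v‖ₑ ^ 2 := by
  have hint := integrable_star_resolvent_mul_resolvent hH hy
  have hval := integral_star_resolvent_mul_resolvent hH hy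
  simp only [ContinuousLinearMap.star_eq_adjoint, ContinuousLinearMap.mul_def] at hint hval
  have hre : RCLike.re (inner ℂ v (algebraMap ℝ (𝓗 →L[ℂ] 𝓗) (Real.pi / |y|) v)) =
      Real.pi / |y| * ‖v‖ ^ 2 := by
    rw [Algebra.algebraMap_eq_smul_one, smul_apply, one_apply_eq_self,
      inner_smul_right_eq_smul, RCLike.smul_re, inner_self_eq_norm_sq]
  rw [lintegral_enorm_sq_apply_eq_re_inner hint, hval, hre, ENNReal.ofReal_mul (by positivity),
    ENNReal.ofReal_pow (norm_nonneg v), ofReal_norm]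

lemma stronglyMeasurable_prod_ofFn {M X : Type*} [Monoid M] [TopologicalSpace M] [ContinuousMul M]
    [MeasurableSpace X] {n : ℕ} {T : Fin n → X → M} (hT : ∀ j, StronglyMeasurable (T j)) :
    StronglyMeasurable fun x : Fin n → X => (List.ofFn fun j => T j (x j)).prod := by
  have h := (List.ofFn fun (j : Fin n) (x : Fin n → X) => T j (x j)).stronglyMeasurable_fun_prod
    (List.forall_mem_ofFn_iff.mpr fun j => (hT j).comp_measurable (measurable_pi_apply j))
  simpa only [List.map_ofFn, Function.comp_def] using h

lemma lintegral_prod_ofFn_apply {𝕜 E X : Type*} [NontriviallyNormedField 𝕜]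
    [NormedAddCommGroup E] [NormedSpace 𝕜 E] [MeasurableSpace X] {n : ℕ}
    (ν : Fin n → Measure X) [∀ j, SigmaFinite (ν j)] {T : Fin n → X → E →L[𝕜] E}
    (hT : ∀ j, StronglyMeasurable (T j)) {φ : E → ℝ≥0∞} (hφ : Continuous φ) {c : Fin n → ℝ≥0∞}
    (hc : ∀ j v, ∫⁻ x, φ (T j x v) ∂ν j = c j * φ v) (v : E) :
    ∫⁻ x, φ ((List.ofFn fun j => T j (x j)).prod v) ∂Measure.pi ν = (∏ j, c j) * φ v := by
  have hmeas {m : ℕ} {S : Fin m → X → E →L[𝕜] E} (hS : ∀ j, StronglyMeasurable (S j)) :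
      Measurable fun x : Fin m → X => φ ((List.ofFn fun j => S j (x j)).prod v) := by
    have hprod := stronglyMeasurable_prod_ofFn hS
    have happly := StronglyMeasurable.apply_continuousLinearMap hprod v
    exact (hφ.comp_stronglyMeasurable happly).measurable
  induction n with
  | zero => simp
  | succ n ih =>
    let split := (MeasurableEquiv.piFinSuccAbove (fun _ : Fin (n + 1) => X) 0).symm
    have hsplit : MeasurePreserving split _ _ := (measurePreserving_piFinSuccAbove ν 0).symm
    rw [← hsplit.lintegral_comp (hmeas hT)]
    refine (lintegral_prod_symm' _ ((hmeas hT).comp hsplit.measurable)).trans ?_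
    simp only [split, Function.comp_apply, MeasurableEquiv.piFinSuccAbove_symm_apply,
      Fin.insertNthEquiv_apply, Fin.insertNth_zero', Fin.succAbove_zero, List.ofFn_succ,
      List.prod_cons, Fin.cons_zero, Fin.cons_succ, mul_apply_eq_comp, hc]
    rw [lintegral_const_mul _ (hmeas fun j => hT j.succ),
      ih (fun j => ν j.succ) (fun j => hT j.succ) (fun j => hc j.succ), Fin.prod_univ_succ,
      mul_assoc]

lemma ringInverse_neg {R : Type*} [Ring R] (a : R) : Ring.inverse (-a) = -Ring.inverse a := by
  by_cases ha : IsUnit a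
  · obtain ⟨u, rfl⟩ := ha
    rw [← Units.val_neg, Ring.inverse_unit, Ring.inverse_unit, inv_neg, Units.val_neg]
  · rw [Ring.inverse_non_unit a ha, Ring.inverse_non_unit _ (IsUnit.neg_iff a |>.not.mpr ha),
      neg_zero]

lemma resolventProd_eq_prod_neg_resolvent {𝓗 : Type*} [NormedAddCommGroup 𝓗]
    [InnerProductSpace ℂ 𝓗] (n : ℕ) (H : Fin n → (𝓗 →L[ℂ] 𝓗)) (lam mu : Fin n → ℝ) :
    resolventProd n H lam mu =
      (List.ofFn fun j => -resolvent (H j) (lam j + Complex.I * mu j : ℂ)).prod := by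
  simp only [resolventProd, resolvent, ← ringInverse_neg, neg_sub,
    Algebra.algebraMap_eq_smul_one]

lemma lintegral_enorm_sq_resolventProd {𝓗 : Type*} [NormedAddCommGroup 𝓗]
    [InnerProductSpace ℂ 𝓗] [CompleteSpace 𝓗] {n : ℕ} {H : Fin n → (𝓗 →L[ℂ] 𝓗)}
    (hsa : ∀ j, IsSelfAdjoint (H j)) (f : 𝓗) {mu : Fin n → ℝ} (hmu : ∀ j, mu j ≠ 0) :
    ∫⁻ lam : Fin n → ℝ, ‖resolventProd n H lam mu f‖ₑ ^ 2 =
      (∏ j, ENNReal.ofReal (Real.pi / |mu j|)) * ‖f‖ₑ ^ 2 := by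
  simp only [resolventProd_eq_prod_neg_resolvent]
  exact lintegral_prod_ofFn_apply (fun _ => volume)
    (fun j => (continuous_resolvent_ofReal_add_I_mul (hsa j) (hmu j)).neg.stronglyMeasurable)
    (φ := fun v => ‖v‖ₑ ^ 2) (by fun_prop)
    (fun j v => by simpa using lintegral_enorm_sq_resolvent_apply (hsa j) (hmu j) v) f

theorem resolvent_norm_sq_integral_general
    {𝓗 : Type*} [NormedAddCommGroup 𝓗] [InnerProductSpace ℂ 𝓗] [CompleteSpace 𝓗]
    (n : ℕ) (H : Fin n → (𝓗 →L[ℂ] 𝓗))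
    (hsa : ∀ j, IsSelfAdjoint (H j))
    (f : 𝓗) (mu : Fin n → ℝ) (hmu : ∀ j, mu j ≠ 0) :
    ENNReal.ofReal (∏ j, |mu j|) *
        ∫⁻ lam : Fin n → ℝ, (‖resolventProd n H lam mu f‖₊ : ℝ≥0∞) ^ 2
      = ENNReal.ofReal (Real.pi ^ n * ‖f‖ ^ 2) := by
  have hfactor (j : Fin n) :
      ENNReal.ofReal |mu j| * ENNReal.ofReal (Real.pi / |mu j|) = ENNReal.ofReal Real.pi := by
    rw [← ENNReal.ofReal_mul (abs_nonneg _), mul_div_cancel₀ _ (abs_ne_zero.mpr (hmu j))]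
  simp only [← enorm_eq_nnnorm]
  rw [lintegral_enorm_sq_resolventProd hsa f hmu, ← mul_assoc,
    ENNReal.ofReal_prod_of_nonneg fun j _ => abs_nonneg _, ← Finset.prod_mul_distrib]
  simp [hfactor, ENNReal.ofReal_mul, ENNReal.ofReal_pow, Real.pi_nonneg]

/-- For pairwise commuting bounded self-adjoint operators `H₁, …, Hₙ`, every `f` and
`μ ∈ (0,∞)ⁿ`: `μ₁⋯μₙ ∫_{ℝⁿ} ‖R(λ+iμ) f‖² dλ = πⁿ ‖f‖²`. -/
theorem resolvent_norm_sq_integral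
    {𝓗 : Type*} [NormedAddCommGroup 𝓗] [InnerProductSpace ℂ 𝓗] [CompleteSpace 𝓗]
    (n : ℕ) (H : Fin n → (𝓗 →L[ℂ] 𝓗))
    (hsa : ∀ j, IsSelfAdjoint (H j))
    (hcomm : ∀ i j, Commute (H i) (H j))
    (f : 𝓗) (mu : Fin n → ℝ) (hmu : ∀ j, 0 < mu j) :
    ENNReal.ofReal (∏ j, mu j) *
        ∫⁻ lam : Fin n → ℝ, (‖resolventProd n H lam mu f‖₊ : ℝ≥0∞) ^ 2
      = ENNReal.ofReal (Real.pi ^ n * ‖f‖ ^ 2) := by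
  simpa only [abs_of_pos (hmu _)] using
    resolvent_norm_sq_integral_general n H hsa f mu fun j => (hmu j).ne'
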